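/- Let F be a Finsler function on ℝⁿ. Then (ℝⁿ, F) is projectively flat in a parameter-preserving manner in the standard coordinates if and only if (ℝⁿ, F) is a Minkowski space, i.e. F is independent of its first argument: F(x, y) = F(x', y) for all x, x', y ∈ ℝⁿ. -/

import Mathlib

open scoped BigOperators Topology
noncomputable section

abbrev E (n : ℕ) := Fin n → ℝ

/-- Partial derivative with respect to the base coordinate `x^i`. -/
def pdx {n : ℕ} (i : Fin n) (f : E n × E n → ℝ) (p : E n × E n) : ℝ :=
  fderiv ℝ f p (Pi.single i 1, 0)

/-- Partial derivative with respect to the fibre coordinate `y^i`. -/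
def pdy {n : ℕ} (i : Fin n) (f : E n × E n → ℝ) (p : E n × E n) : ℝ :=
  fderiv ℝ f p (0, Pi.single i 1)

/-- A Finsler function on `ℝⁿ`. -/
structure IsFinsler {n : ℕ} (F : E n × E n → ℝ) : Prop where
  smooth : ContDiffOn ℝ (⊤ : ℕ∞) F {p : E n × E n | p.2 ≠ 0}
  homog : ∀ (x y : E n) (c : ℝ), 0 < c → F (x, c • y) = c * F (x, y)
  pos : ∀ (x y : E n), y ≠ 0 → 0 < F (x, y)
  posDef : ∀ (x y : E n), y ≠ 0 →
    (Matrix.of fun i j : Fin n =>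
      (1 / 2) * pdy i (pdy j (fun p => F p ^ 2)) (x, y)).PosDef

/-- A geodesic of `(ℝⁿ, F)`: a `C²` curve on a nontrivial open interval, with nowhere
vanishing velocity, positive constant speed, satisfying the Euler–Lagrange equations. -/
structure IsGeodesic {n : ℕ} (F : E n × E n → ℝ) (γ : ℝ → E n) (t₁ t₂ : ℝ) : Prop where
  lt : t₁ < t₂
  smooth : ContDiffOn ℝ 2 γ (Set.Ioo t₁ t₂)
  vel : ∀ t ∈ Set.Ioo t₁ t₂, deriv γ t ≠ 0
  constSpeed : ∃ c : ℝ, 0 < c ∧ ∀ t ∈ Set.Ioo t₁ t₂, F (γ t, deriv γ t) = c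
  eulerLagrange : ∀ (i : Fin n), ∀ t ∈ Set.Ioo t₁ t₂,
    deriv (fun s => pdy i F (γ s, deriv γ s)) t = pdx i F (γ t, deriv γ t)

/-- The Hamel equations in the standard coordinates. -/
def SatisfiesHamel {n : ℕ} (F : E n × E n → ℝ) : Prop :=
  ∀ (x y : E n), y ≠ 0 → ∀ i : Fin n,
    ∑ k, pdx k (pdy i F) (x, y) * y k = ∑ k, pdx i (pdy k F) (x, y) * y k

/-- `(ℝⁿ, F)` is rectilinear in the standard coordinates. -/
def Rectilinear {n : ℕ} (F : E n × E n → ℝ) : Prop :=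
  ∀ (γ : ℝ → E n) (t₁ t₂ : ℝ), IsGeodesic F γ t₁ t₂ →
    ∃ (f : ℝ → ℝ) (a b : E n), a ≠ 0 ∧
      ContDiffOn ℝ 2 f (Set.Ioo t₁ t₂) ∧
      (∀ t ∈ Set.Ioo t₁ t₂, 0 < deriv f t) ∧
      ∀ t ∈ Set.Ioo t₁ t₂, γ t = f t • a + b

/-- `(ℝⁿ, F)` is projectively flat in a parameter-preserving manner in the standard
coordinates: every geodesic has the form `t ↦ t • a + b`. -/
def ParamFlat {n : ℕ} (F : E n × E n → ℝ) : Prop :=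
  ∀ (γ : ℝ → E n) (t₁ t₂ : ℝ), IsGeodesic F γ t₁ t₂ →
    ∃ a b : E n, a ≠ 0 ∧ ∀ t ∈ Set.Ioo t₁ t₂, γ t = t • a + b

section Helpers

variable {n : ℕ}

/-- vertical components of a covector -/
def vR (n : ℕ) : ((E n × E n) →L[ℝ] ℝ) →L[ℝ] E n :=
  ContinuousLinearMap.pi fun i =>
    ContinuousLinearMap.apply ℝ ℝ ((0, Pi.single i 1) : E n × E n)

/-- horizontal components of a covector -/
def hS (n : ℕ) : ((E n × E n) →L[ℝ] ℝ) →L[ℝ] E n :=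
  ContinuousLinearMap.pi fun i =>
    ContinuousLinearMap.apply ℝ ℝ ((Pi.single i 1, 0) : E n × E n)

lemma vR_apply (f : (E n × E n) →L[ℝ] ℝ) (i : Fin n) :
    vR n f i = f (0, Pi.single i 1) := rfl

lemma hS_apply (f : (E n × E n) →L[ℝ] ℝ) (i : Fin n) :
    hS n f i = f (Pi.single i 1, 0) := rfl

lemma vR_sum (f : (E n × E n) →L[ℝ] ℝ) (v : E n) : f (0, v) = ∑ i, v i * vR n f i := by
  have := LinearMap.pi_apply_eq_sum_univ
    ((f.comp (ContinuousLinearMap.inr ℝ (E n) (E n))).toLinearMap) v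
  have e : ∀ i : Fin n, (fun j => if i = j then (1 : ℝ) else 0) = Pi.single i 1 := fun i => by
    funext j; simp [Pi.single_apply, eq_comm]
  simp only [e] at this
  exact this

lemma hS_sum (f : (E n × E n) →L[ℝ] ℝ) (v : E n) : f (v, 0) = ∑ i, v i * hS n f i := by
  have := LinearMap.pi_apply_eq_sum_univ
    ((f.comp (ContinuousLinearMap.inl ℝ (E n) (E n))).toLinearMap) v
  have e : ∀ i : Fin n, (fun j => if i = j then (1 : ℝ) else 0) = Pi.single i 1 := fun i => by
    funext j; simp [Pi.single_apply, eq_comm]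
  simp only [e] at this
  exact this

/-- the slit set -/
lemma isOpen_slit : IsOpen {p : E n × E n | p.2 ≠ 0} :=
  isOpen_ne_fun continuous_snd continuous_const

variable {F : E n × E n → ℝ}

lemma IsFinsler.cda (hF : IsFinsler F) {p : E n × E n} (hp : p.2 ≠ 0) :
    ContDiffAt ℝ (⊤ : ℕ∞) F p :=
  hF.smooth.contDiffAt (isOpen_slit.mem_nhds hp)

/-- squared Finsler function -/
def Lsq (F : E n × E n → ℝ) : E n × E n → ℝ := fun p => F p ^ 2

lemma IsFinsler.cdaL (hF : IsFinsler F) {p : E n × E n} (hp : p.2 ≠ 0) :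
    ContDiffAt ℝ (⊤ : ℕ∞) (Lsq F) p := (hF.cda hp).pow 2

lemma IsFinsler.cdadL (hF : IsFinsler F) {p : E n × E n} (hp : p.2 ≠ 0) :
    ContDiffAt ℝ (⊤ : ℕ∞) (fderiv ℝ (Lsq F)) p :=
  (hF.cdaL hp).fderiv_right (by simp)

lemma IsFinsler.cdadF (hF : IsFinsler F) {p : E n × E n} (hp : p.2 ≠ 0) :
    ContDiffAt ℝ (⊤ : ℕ∞) (fderiv ℝ F) p :=
  (hF.cda hp).fderiv_right (by simp)

lemma IsFinsler.cdaddL (hF : IsFinsler F) {p : E n × E n} (hp : p.2 ≠ 0) :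
    ContDiffAt ℝ (⊤ : ℕ∞) (fderiv ℝ (fderiv ℝ (Lsq F))) p :=
  (hF.cdadL hp).fderiv_right (by simp)

lemma IsFinsler.diffF (hF : IsFinsler F) {p : E n × E n} (hp : p.2 ≠ 0) :
    DifferentiableAt ℝ F p := (hF.cda hp).differentiableAt (by simp)

lemma IsFinsler.diffL (hF : IsFinsler F) {p : E n × E n} (hp : p.2 ≠ 0) :
    DifferentiableAt ℝ (Lsq F) p := (hF.cdaL hp).differentiableAt (by simp)

lemma IsFinsler.diffdL (hF : IsFinsler F) {p : E n × E n} (hp : p.2 ≠ 0) :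
    DifferentiableAt ℝ (fderiv ℝ (Lsq F)) p := (hF.cdadL hp).differentiableAt (by simp)

lemma IsFinsler.diffdF (hF : IsFinsler F) {p : E n × E n} (hp : p.2 ≠ 0) :
    DifferentiableAt ℝ (fderiv ℝ F) p := (hF.cdadF hp).differentiableAt (by simp)

lemma IsFinsler.fderivL (hF : IsFinsler F) {p : E n × E n} (hp : p.2 ≠ 0) :
    fderiv ℝ (Lsq F) p = (2 * F p) • fderiv ℝ F p := by
  have h := ((hF.diffF hp).hasFDerivAt.pow 2).fderiv
  unfold Lsq
  rw [h]
  simp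

/-- fundamental tensor as an endomorphism -/
def gA (F : E n × E n → ℝ) (p : E n × E n) : E n →L[ℝ] E n :=
  (vR n).comp ((fderiv ℝ (fderiv ℝ (Lsq F)) p).comp (ContinuousLinearMap.inr ℝ (E n) (E n)))

lemma gA_apply (p : E n × E n) (v : E n) :
    gA F p v = vR n (fderiv ℝ (fderiv ℝ (Lsq F)) p (0, v)) := rfl

lemma pdy_pdy (hF : IsFinsler F) {p : E n × E n} (hp : p.2 ≠ 0) (i j : Fin n) :
    pdy i (pdy j (fun p => F p ^ 2)) p =
      fderiv ℝ (fderiv ℝ (Lsq F)) p (0, Pi.single i 1) (0, Pi.single j 1) := by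
  have h := (hF.diffdL hp).hasFDerivAt.clm_apply
    (hasFDerivAt_const ((0, Pi.single j 1) : E n × E n) p)
  have h2 := h.fderiv
  change fderiv ℝ (fun q => fderiv ℝ (Lsq F) q (0, Pi.single j 1)) p (0, Pi.single i 1) = _
  rw [h2]
  simp

lemma gA_injective (hF : IsFinsler F) {p : E n × E n} (hp : p.2 ≠ 0) :
    Function.Injective (gA F p) := by
  rw [injective_iff_map_eq_zero]
  intro v hv
  by_contra hne
  have h := (hF.posDef p.1 p.2 hp).dotProduct_mulVec_pos hne
  set H := fderiv ℝ (fderiv ℝ (Lsq F)) p with hH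
  have h0 : H (0, v) (0, v) = 0 := by
    rw [vR_sum]
    have : vR n (H (0, v)) = 0 := hv
    simp [this]
  have h1 : H (0, v) (0, v) = ∑ i, v i * ∑ j, v j * H (0, Pi.single i 1) (0, Pi.single j 1) := by
    have e := vR_sum (H.flip (0, v)) v
    simp only [ContinuousLinearMap.flip_apply, vR_apply] at e
    rw [e]
    refine Finset.sum_congr rfl fun i _ => ?_
    rw [vR_sum (H (0, Pi.single i 1)) v]
    rfl
  have h2 : star v ⬝ᵥ ((Matrix.of fun i j : Fin n =>
      (1 / 2) * pdy i (pdy j (fun p => F p ^ 2)) (p.1, p.2)).mulVec v) =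
      1 / 2 * H (0, v) (0, v) := by
    rw [h1]
    simp only [dotProduct, Matrix.mulVec, Matrix.of_apply, Prod.mk.eta, pdy_pdy hF hp,
      Finset.mul_sum]
    refine Finset.sum_congr rfl fun i _ => Finset.sum_congr rfl fun j _ => ?_
    simp only [Pi.star_apply, star_trivial]
    ring
  rw [h2, h0] at h
  simp at h

/-- the fundamental tensor as an equivalence -/
def gE (hF : IsFinsler F) {p : E n × E n} (hp : p.2 ≠ 0) : E n ≃L[ℝ] E n :=
  (LinearEquiv.ofInjectiveEndo (gA F p).toLinearMap (gA_injective hF hp)).toContinuousLinearEquiv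

lemma gE_coe (hF : IsFinsler F) {p : E n × E n} (hp : p.2 ≠ 0) :
    (gE hF hp : E n →L[ℝ] E n) = gA F p := by
  ext v; rfl

/-- acceleration -/
def acc (F : E n × E n → ℝ) (p : E n × E n) : E n :=
  (gA F p).inverse (hS n (fderiv ℝ (Lsq F) p) -
    vR n (fderiv ℝ (fderiv ℝ (Lsq F)) p (p.2, 0)))

lemma gA_acc (hF : IsFinsler F) {p : E n × E n} (hp : p.2 ≠ 0) :
    gA F p (acc F p) = hS n (fderiv ℝ (Lsq F) p) -
      vR n (fderiv ℝ (fderiv ℝ (Lsq F)) p (p.2, 0)) := by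
  unfold acc
  rw [← gE_coe hF hp, ContinuousLinearMap.inverse_equiv]
  simp

lemma acc_contDiffAt (hF : IsFinsler F) {p : E n × E n} (hp : p.2 ≠ 0) :
    ContDiffAt ℝ 1 (acc F) p := by
  have h1 : ContDiffAt ℝ 1 (fderiv ℝ (Lsq F)) p := (hF.cdadL hp).of_le (by exact_mod_cast le_top)
  have h2 : ContDiffAt ℝ 1 (fderiv ℝ (fderiv ℝ (Lsq F))) p :=
    (hF.cdaddL hp).of_le (by exact_mod_cast le_top)
  have hA : ContDiffAt ℝ 1 (gA F) p :=
    contDiffAt_const.clm_comp (h2.clm_comp contDiffAt_const)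
  have hinv : ContDiffAt ℝ 1 (fun q => (gA F q).inverse) p := by
    have := contDiffAt_map_inverse (n := 1) (gE hF hp)
    rw [gE_coe] at this
    exact this.comp p hA
  refine hinv.clm_apply (ContDiffAt.sub ?_ ?_)
  · exact (contDiffAt_const (c := hS n)).clm_apply h1
  · refine (contDiffAt_const (c := vR n)).clm_apply (h2.clm_apply ?_)
    exact contDiffAt_snd.prodMk contDiffAt_const

/-- geodesic spray -/
def spray (F : E n × E n → ℝ) (p : E n × E n) : E n × E n := (p.2, acc F p)

lemma spray_contDiffAt (hF : IsFinsler F) {p : E n × E n} (hp : p.2 ≠ 0) :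
    ContDiffAt ℝ 1 (spray F) p := contDiffAt_snd.prodMk (acc_contDiffAt hF hp)

lemma euler (hF : IsFinsler F) {p : E n × E n} (hp : p.2 ≠ 0) :
    fderiv ℝ (Lsq F) p (0, p.2) = 2 * Lsq F p := by
  obtain ⟨x, y⟩ := p
  have h1 : HasDerivAt (fun c : ℝ => ((x, c • y) : E n × E n)) (0, y) 1 := by
    have := (hasDerivAt_const (1 : ℝ) x).prodMk ((hasDerivAt_id (1 : ℝ)).smul_const y)
    simpa using this
  have hd : HasFDerivAt (Lsq F) (fderiv ℝ (Lsq F) (x, y)) (x, (1 : ℝ) • y) := by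
    rw [one_smul]; exact (hF.diffL hp).hasFDerivAt
  have h2 := hd.comp_hasDerivAt (1 : ℝ) h1
  have h3 : HasDerivAt (fun c : ℝ => c ^ 2 * Lsq F (x, y)) (2 * Lsq F (x, y)) 1 := by
    have := (hasDerivAt_pow 2 (1 : ℝ)).mul_const (Lsq F (x, y))
    simpa using this
  have h4 : (fun c : ℝ => c ^ 2 * Lsq F (x, y)) =ᶠ[𝓝 1] Lsq F ∘ fun c : ℝ => (x, c • y) := by
    filter_upwards [lt_mem_nhds (zero_lt_one (α := ℝ))] with c hc
    simp only [Function.comp, Lsq, hF.homog x y c hc]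
    ring
  exact (h2.congr_of_eventuallyEq h4).unique h3

/-- existence of geodesics -/
lemma exists_geodesic (hF : IsFinsler F) (x y : E n) (hy : y ≠ 0) :
    ∃ (γ : ℝ → E n) (ε : ℝ), 0 < ε ∧ IsGeodesic F γ (-ε) ε ∧ γ 0 = x ∧ deriv γ 0 = y := by
  obtain ⟨α, hα0, δ, hδ, hα⟩ :=
    (spray_contDiffAt hF (p := (x, y)) hy).exists_forall_mem_closedBall_exists_eq_forall_mem_Ioo_hasDerivAt₀ 0
  have hc0 : ContinuousAt α 0 := (hα 0 (by simp [hδ])).continuousAt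
  have hev : ∀ᶠ t in 𝓝 (0 : ℝ), (α t).2 ≠ 0 := by
    have : α ⁻¹' {p : E n × E n | p.2 ≠ 0} ∈ 𝓝 (0 : ℝ) :=
      hc0 (isOpen_slit.mem_nhds (by rw [hα0]; exact hy))
    exact this
  obtain ⟨η, hη, hη2⟩ := Metric.eventually_nhds_iff.1 hev
  set ε := min δ η with hε
  have hεp : 0 < ε := lt_min hδ hη
  set I := Set.Ioo (-ε) ε with hI
  have hIo : IsOpen I := isOpen_Ioo
  have h0I : (0 : ℝ) ∈ I := ⟨by linarith, hεp⟩
  have hd : ∀ t ∈ I, HasDerivAt α (spray F (α t)) t := fun t ht => hα t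
    ⟨by linarith [ht.1, min_le_left δ η], by linarith [ht.2, min_le_left δ η]⟩
  have hne : ∀ t ∈ I, (α t).2 ≠ 0 := fun t ht => hη2 (by
    rw [Real.dist_eq, sub_zero, abs_lt]
    exact ⟨by linarith [ht.1, min_le_right δ η], by linarith [ht.2, min_le_right δ η]⟩)
  have hd1 : ∀ t ∈ I, HasDerivAt (fun s => (α s).1) (α t).2 t := fun t ht => (hd t ht).fst
  have hd2 : ∀ t ∈ I, HasDerivAt (fun s => (α s).2) (acc F (α t)) t := fun t ht => (hd t ht).snd
  have hder : ∀ t ∈ I, deriv (fun s => (α s).1) t = (α t).2 := fun t ht => (hd1 t ht).deriv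
  have hpair : ∀ t ∈ I, ((α t).1, deriv (fun s => (α s).1) t) = α t := fun t ht => by
    rw [hder t ht]
  have hcont : ContinuousOn α I := fun t ht => (hd t ht).continuousAt.continuousWithinAt
  have hC1 : ContDiffOn ℝ 1 (fun s => (α s).2) I := by
    have e : (1 : WithTop ℕ∞) = 0 + 1 := by simp
    rw [e, contDiffOn_succ_iff_deriv_of_isOpen hIo]
    refine ⟨fun t ht => (hd2 t ht).differentiableAt.differentiableWithinAt, by simp, ?_⟩
    rw [contDiffOn_zero]
    refine ContinuousOn.congr (f := fun t => acc F (α t)) ?_ fun t ht => (hd2 t ht).deriv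
    intro t ht
    exact ((acc_contDiffAt hF (hne t ht)).continuousAt.comp
      (hd t ht).continuousAt).continuousWithinAt
  have hC2 : ContDiffOn ℝ 2 (fun s => (α s).1) I := by
    have e : (2 : WithTop ℕ∞) = 1 + 1 := by norm_num
    rw [e, contDiffOn_succ_iff_deriv_of_isOpen hIo]
    exact ⟨fun t ht => (hd1 t ht).differentiableAt.differentiableWithinAt, by simp,
      hC1.congr hder⟩
  -- Euler-Lagrange for the energy
  have hdL : ∀ t ∈ I, HasDerivAt (fun s => fderiv ℝ (Lsq F) (α s))
      (fderiv ℝ (fderiv ℝ (Lsq F)) (α t) (spray F (α t))) t := fun t ht =>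
    (hF.diffdL (hne t ht)).hasFDerivAt.comp_hasDerivAt t (hd t ht)
  have hEL0 : ∀ t ∈ I, vR n (fderiv ℝ (fderiv ℝ (Lsq F)) (α t) (spray F (α t))) =
      hS n (fderiv ℝ (Lsq F) (α t)) := fun t ht => by
    have e : spray F (α t) = ((α t).2, 0) + (0, acc F (α t)) := by simp [spray]
    rw [e, map_add, map_add, ← gA_apply, gA_acc hF (hne t ht)]
    abel
  have hEL : ∀ t ∈ I, HasDerivAt (fun s => vR n (fderiv ℝ (Lsq F) (α s)))
      (hS n (fderiv ℝ (Lsq F) (α t))) t := fun t ht => by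
    have := (vR n).hasFDerivAt.comp_hasDerivAt t (hdL t ht)
    rw [hEL0 t ht] at this
    exact this
  have hLd : ∀ t ∈ I, HasDerivAt (fun s => Lsq F (α s)) 0 t := fun t ht => by
    have a1 : HasDerivAt (fun s => Lsq F (α s)) (fderiv ℝ (Lsq F) (α t) (spray F (α t))) t :=
      (hF.diffL (hne t ht)).hasFDerivAt.comp_hasDerivAt t (hd t ht)
    have a2 : HasDerivAt (fun s => ∑ i, (α s).2 i * vR n (fderiv ℝ (Lsq F) (α s)) i)
        (∑ i, (acc F (α t) i * vR n (fderiv ℝ (Lsq F) (α t)) i +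
          (α t).2 i * hS n (fderiv ℝ (Lsq F) (α t)) i)) t := by
      refine HasDerivAt.fun_sum fun i _ => ?_
      exact (hasDerivAt_pi.1 (hd2 t ht) i).mul (hasDerivAt_pi.1 (hEL t ht) i)
    rw [Finset.sum_add_distrib, ← vR_sum, ← hS_sum] at a2
    have e : spray F (α t) = (0, acc F (α t)) + ((α t).2, 0) := by simp [spray]
    rw [← map_add, ← e] at a2
    have a3 : (fun s => 2 * Lsq F (α s)) =ᶠ[𝓝 t]
        (fun s => ∑ i, (α s).2 i * vR n (fderiv ℝ (Lsq F) (α s)) i) := by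
      filter_upwards [hIo.mem_nhds ht] with s hs
      rw [← vR_sum, euler hF (hne s hs)]
    have a4 := (a2.congr_of_eventuallyEq a3).unique (a1.const_mul 2)
    have a5 : fderiv ℝ (Lsq F) (α t) (spray F (α t)) = 0 := by linarith
    rwa [a5] at a1
  have hLc : ∀ t ∈ I, Lsq F (α t) = Lsq F (α 0) := fun t ht =>
    hIo.is_const_of_deriv_eq_zero isPreconnected_Ioo
      (fun s hs => (hLd s hs).differentiableAt.differentiableWithinAt)
      (fun s hs => (hLd s hs).deriv) ht h0I
  have hFp : ∀ t ∈ I, 0 < F (α t) := fun t ht => hF.pos (α t).1 (α t).2 (hne t ht)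
  have hFc : ∀ t ∈ I, F (α t) = F (α 0) := fun t ht =>
    (pow_left_inj₀ (hFp t ht).le (hFp 0 h0I).le two_ne_zero).1 (hLc t ht)
  refine ⟨fun s => (α s).1, ε, hεp, ⟨by linarith, hC2, ?_, ⟨F (α 0), hFp 0 h0I, ?_⟩, ?_⟩, ?_, ?_⟩
  · intro t ht
    rw [hder t ht]; exact hne t ht
  · intro t ht
    rw [hpair t ht]; exact hFc t ht
  · intro i t ht
    have hc : F (α 0) ≠ 0 := (hFp 0 h0I).ne'
    have b1 := (hasDerivAt_pi.1 (hEL t ht) i).const_mul ((2 * F (α 0))⁻¹)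
    have b2 : (fun s => pdy i F ((α s).1, deriv (fun s => (α s).1) s)) =ᶠ[𝓝 t]
        (fun s => (2 * F (α 0))⁻¹ * vR n (fderiv ℝ (Lsq F) (α s)) i) := by
      filter_upwards [hIo.mem_nhds ht] with s hs
      rw [hpair s hs, vR_apply, hF.fderivL (hne s hs), hFc s hs]
      simp only [pdy, smul_apply, smul_eq_mul]
      field_simp
    rw [(b1.congr_of_eventuallyEq b2).deriv, hpair t ht, hS_apply, hF.fderivL (hne t ht), hFc t ht]
    simp only [pdx, smul_apply, smul_eq_mul]
    field_simp
  · simp [hα0]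
  · rw [hder 0 h0I, hα0]

lemma flat_line (hF : IsFinsler F) (h : ParamFlat F) (x y : E n) (hy : y ≠ 0) :
    fderiv ℝ F (x, y) (y, 0) = 0 ∧
    ∀ i, fderiv ℝ (fderiv ℝ F) (x, y) (y, 0) (0, Pi.single i 1) =
      fderiv ℝ F (x, y) (Pi.single i 1, 0) := by
  obtain ⟨γ, ε, hε, hγ, h0, h0'⟩ := exists_geodesic hF x y hy
  obtain ⟨a, b, ha, hab⟩ := h γ _ _ hγ
  have h0I : (0 : ℝ) ∈ Set.Ioo (-ε) ε := ⟨by linarith, hε⟩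
  have hder : ∀ t ∈ Set.Ioo (-ε) ε, deriv γ t = a := fun t ht => by
    have e : γ =ᶠ[𝓝 t] fun s => s • a + b := by
      filter_upwards [isOpen_Ioo.mem_nhds ht] with s hs using hab s hs
    have := ((hasDerivAt_id t).smul_const a).add_const b
    rw [e.deriv_eq]
    simpa using this.deriv
  have hay : a = y := by rw [← hder 0 h0I, h0']
  have hbx : b = x := by have := hab 0 h0I; rw [h0] at this; simpa using this.symm
  subst hay hbx
  have hline : HasDerivAt (fun t : ℝ => ((t • a + b, a) : E n × E n)) (a, 0) 0 := by
    have := (((hasDerivAt_id (0 : ℝ)).smul_const a).add_const b).prodMk (hasDerivAt_const (0 : ℝ) a)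
    simpa using this
  have hnear : ∀ᶠ t in 𝓝 (0 : ℝ), t ∈ Set.Ioo (-ε) ε := isOpen_Ioo.mem_nhds h0I
  constructor
  · obtain ⟨c, hc, hcs⟩ := hγ.constSpeed
    have hd : HasFDerivAt F (fderiv ℝ F (b, a)) ((0 : ℝ) • a + b, a) := by
      simpa using (hF.diffF (p := (b, a)) ha).hasFDerivAt
    have h1 := hd.comp_hasDerivAt (0 : ℝ) hline
    have h2 : (fun _ : ℝ => c) =ᶠ[𝓝 0] (F ∘ fun t : ℝ => (t • a + b, a)) := by
      filter_upwards [hnear] with t ht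
      rw [← hcs t ht, hder t ht, hab t ht]; rfl
    exact (h1.congr_of_eventuallyEq h2).unique (hasDerivAt_const _ _)
  · intro i
    have hd : HasFDerivAt (fderiv ℝ F) (fderiv ℝ (fderiv ℝ F) (b, a)) ((0 : ℝ) • a + b, a) := by
      simpa using (hF.diffdF (p := (b, a)) ha).hasFDerivAt
    have h1 : HasDerivAt (fun t : ℝ => fderiv ℝ F (t • a + b, a) (0, Pi.single i 1))
        (fderiv ℝ (fderiv ℝ F) (b, a) (a, 0) (0, Pi.single i 1)) 0 :=
      (ContinuousLinearMap.apply ℝ ℝ ((0, Pi.single i 1) : E n × E n)).hasFDerivAt.comp_hasDerivAt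
        (0 : ℝ) (hd.comp_hasDerivAt (0 : ℝ) hline)
    have h2 : (fun s => pdy i F (γ s, deriv γ s)) =ᶠ[𝓝 0]
        (fun t : ℝ => fderiv ℝ F (t • a + b, a) (0, Pi.single i 1)) := by
      filter_upwards [hnear] with t ht
      rw [hder t ht, hab t ht]; rfl
    have h3 := hγ.eulerLagrange i 0 h0I
    rw [(h1.congr_of_eventuallyEq h2).deriv, h0, h0'] at h3
    simpa [pdx] using h3

lemma flat_pdx (hF : IsFinsler F) (h : ParamFlat F) (x y : E n) (hy : y ≠ 0) :
    ∀ i, fderiv ℝ F (x, y) (Pi.single i 1, 0) = 0 := by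
  intro i
  have h1 := (hF.diffdF (p := (x, y)) hy).hasFDerivAt.clm_apply
    ((hasFDerivAt_snd (𝕜 := ℝ) (p := ((x, y) : E n × E n))).prodMk
      (hasFDerivAt_const (0 : E n) ((x, y) : E n × E n)))
  have h2 : (fun _ : E n × E n => (0 : ℝ)) =ᶠ[𝓝 (x, y)] (fun p => fderiv ℝ F p (p.2, 0)) := by
    filter_upwards [isOpen_slit.mem_nhds (show ((x, y) : E n × E n).2 ≠ 0 from hy)] with p hp
    exact ((flat_line hF h p.1 p.2 hp).1).symm
  have h3 := (h1.congr_of_eventuallyEq h2).unique (hasFDerivAt_const _ _)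
  have h4 := congrArg (fun f => f (0, Pi.single i 1)) h3
  have h5 := (flat_line hF h x y hy).2 i
  have h6 : IsSymmSndFDerivAt ℝ F (x, y) :=
    (hF.cda (p := (x, y)) hy).isSymmSndFDerivAt (by
      rw [minSmoothness_of_isRCLikeNormedField]; exact WithTop.coe_le_coe.2 le_top)
  have h7 := h6 (0, Pi.single i 1) (y, 0)
  simp at h4
  linarith

lemma flat_const (hF : IsFinsler F) (h : ParamFlat F) (x x' y : E n) :
    F (x, y) = F (x', y) := by
  by_cases hy : y = 0
  · subst hy
    have h0 : ∀ x : E n, F (x, 0) = 0 := fun x => by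
      have := hF.homog x 0 2 (by norm_num)
      rw [smul_zero] at this; linarith
    rw [h0, h0]
  · have hd : ∀ z, HasFDerivAt (fun z => F (z, y)) (0 : E n →L[ℝ] ℝ) z := fun z => by
      have h1 := (hF.diffF (p := (z, y)) hy).hasFDerivAt.comp z
        ((hasFDerivAt_id (𝕜 := ℝ) z).prodMk (hasFDerivAt_const y z))
      refine h1.congr_fderiv ?_
      ext v
      have h2 := hS_sum (fderiv ℝ F (z, y)) v
      simp only [hS_apply, flat_pdx hF h z y hy] at h2
      simpa using h2
    exact is_const_of_fderiv_eq_zero (𝕜 := ℝ) (fun z => (hd z).differentiableAt)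
      (fun z => (hd z).fderiv) x x'

lemma const_flat (hF : IsFinsler F) (h : ∀ x x' y : E n, F (x, y) = F (x', y)) :
    ParamFlat F := by
  intro γ t₁ t₂ hγ
  set I := Set.Ioo t₁ t₂ with hI
  have hIo : IsOpen I := isOpen_Ioo
  have hC := hγ.smooth
  have e2 : (2 : WithTop ℕ∞) = 1 + 1 := by norm_num
  rw [e2, contDiffOn_succ_iff_deriv_of_isOpen hIo] at hC
  obtain ⟨hD1, -, hD2⟩ := hC
  have hd1 : ∀ t ∈ I, HasDerivAt γ (deriv γ t) t := fun t ht =>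
    (hD1.differentiableAt (hIo.mem_nhds ht)).hasDerivAt
  have hd2 : ∀ t ∈ I, HasDerivAt (deriv γ) (deriv (deriv γ) t) t := fun t ht =>
    ((hD2.differentiableOn (by simp)).differentiableAt (hIo.mem_nhds ht)).hasDerivAt
  -- translation invariance
  have htr : ∀ (w : E n) (p : E n × E n), Lsq F (p + (w, 0)) = Lsq F p := fun w p => by
    obtain ⟨x, y⟩ := p
    simp only [Lsq, Prod.mk_add_mk, add_zero, h (x + w) x y]
  have htrF : ∀ (w : E n) (p : E n × E n), F (p + (w, 0)) = F p := fun w p => by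
    obtain ⟨x, y⟩ := p
    simp only [Prod.mk_add_mk, add_zero, h (x + w) x y]
  have hfd : ∀ (w : E n) (p : E n × E n), fderiv ℝ (Lsq F) (p + (w, 0)) = fderiv ℝ (Lsq F) p :=
    fun w p => by
      rw [← fderiv_comp_add_right]
      congr 1; funext q; exact htr w q
  have hB : ∀ (p : E n × E n) (w : E n), p.2 ≠ 0 →
      fderiv ℝ (fderiv ℝ (Lsq F)) p (w, 0) = 0 := fun p w hp => by
    have hline : HasDerivAt (fun t : ℝ => p + (t • w, 0)) ((w, 0) : E n × E n) 0 := by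
      have := (((hasDerivAt_id (0 : ℝ)).smul_const w).prodMk
        (hasDerivAt_const (0 : ℝ) (0 : E n))).const_add p
      simpa using this
    have hd : HasFDerivAt (fderiv ℝ (Lsq F)) (fderiv ℝ (fderiv ℝ (Lsq F)) p)
        (p + ((0 : ℝ) • w, 0)) := by
      rw [zero_smul, Prod.mk_zero_zero, add_zero]; exact (hF.diffdL hp).hasFDerivAt
    have h1 := hd.comp_hasDerivAt (0 : ℝ) hline
    have h2 : (fderiv ℝ (Lsq F) ∘ fun t : ℝ => p + (t • w, 0)) =
        fun _ => fderiv ℝ (Lsq F) p := by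
      funext t; exact hfd _ _
    rw [h2] at h1
    exact h1.unique (hasDerivAt_const _ _)
  have hX : ∀ (p : E n × E n) (w : E n), p.2 ≠ 0 → fderiv ℝ F p (w, 0) = 0 := fun p w hp => by
    have hline : HasDerivAt (fun t : ℝ => p + (t • w, 0)) ((w, 0) : E n × E n) 0 := by
      have := (((hasDerivAt_id (0 : ℝ)).smul_const w).prodMk
        (hasDerivAt_const (0 : ℝ) (0 : E n))).const_add p
      simpa using this
    have hd : HasFDerivAt F (fderiv ℝ F p) (p + ((0 : ℝ) • w, 0)) := by
      rw [zero_smul, Prod.mk_zero_zero, add_zero]; exact (hF.diffF hp).hasFDerivAt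
    have h1 := hd.comp_hasDerivAt (0 : ℝ) hline
    have h2 : (F ∘ fun t : ℝ => p + (t • w, 0)) = fun _ => F p := by
      funext t; exact htrF _ _
    rw [h2] at h1
    exact h1.unique (hasDerivAt_const _ _)
  obtain ⟨c, hc, hcs⟩ := hγ.constSpeed
  have hacc : ∀ t ∈ I, deriv (deriv γ) t = 0 := fun t ht => by
    have hp := hγ.vel t ht
    have h1 := (vR n).hasFDerivAt.comp_hasDerivAt t
      ((hF.diffdL (p := (γ t, deriv γ t)) hp).hasFDerivAt.comp_hasDerivAt t
        ((hd1 t ht).prodMk (hd2 t ht)))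
    have e : ((deriv γ t, deriv (deriv γ) t) : E n × E n) =
      (deriv γ t, 0) + (0, deriv (deriv γ) t) := by simp
    rw [e, map_add, hB _ _ hp, zero_add, ← gA_apply] at h1
    apply gA_injective hF (p := (γ t, deriv γ t)) hp
    rw [map_zero]
    funext i
    have h2 := (hasDerivAt_pi.1 h1 i).const_mul ((2 * c)⁻¹)
    have h3 : (fun s => pdy i F (γ s, deriv γ s)) =ᶠ[𝓝 t]
        (fun s => (2 * c)⁻¹ * vR n (fderiv ℝ (Lsq F) (γ s, deriv γ s)) i) := by
      filter_upwards [hIo.mem_nhds ht] with s hs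
      rw [vR_apply, hF.fderivL (p := (γ s, deriv γ s)) (hγ.vel s hs), hcs s hs]
      simp only [pdy, smul_apply, smul_eq_mul]
      field_simp
    have h4 := hγ.eulerLagrange i t ht
    rw [(h2.congr_of_eventuallyEq h3).deriv] at h4
    have h5 : pdx i F (γ t, deriv γ t) = 0 := hX _ _ hp
    rw [h5] at h4
    have h6 : (2 * c)⁻¹ ≠ 0 := by positivity
    exact (mul_eq_zero.1 h4).resolve_left h6
  obtain ⟨a, ha⟩ := hIo.exists_is_const_of_deriv_eq_zero isPreconnected_Ioo
    (fun t ht => (hd2 t ht).differentiableAt.differentiableWithinAt) (fun t ht => hacc t ht)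
  have hb : ∀ t ∈ I, HasDerivAt (fun s => γ s - s • a) 0 t := fun t ht => by
    have := (hd1 t ht).sub ((hasDerivAt_id t).smul_const a)
    rw [ha t ht, one_smul, sub_self] at this
    exact this
  obtain ⟨b, hb'⟩ := hIo.exists_is_const_of_deriv_eq_zero isPreconnected_Ioo
    (fun t ht => (hb t ht).differentiableAt.differentiableWithinAt) (fun t ht => (hb t ht).deriv)
  refine ⟨a, b, ?_, fun t ht => ?_⟩
  · have hm : (t₁ + t₂) / 2 ∈ I := ⟨by linarith [hγ.lt], by linarith [hγ.lt]⟩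
    rw [← ha _ hm]; exact hγ.vel _ hm
  · rw [← hb' t ht]; abel

end Helpers

/-- `(ℝⁿ, F)` is projectively flat in a parameter-preserving manner iff it
is a Minkowski space, i.e. `F` does not depend on its first argument. -/
theorem statement11 {n : ℕ} (F : E n × E n → ℝ) (hF : IsFinsler F) :
    ParamFlat F ↔ (∀ x x' y : E n, F (x, y) = F (x', y)) := by
  exact ⟨fun h x x' y => flat_const hF h x x' y, fun h => const_flat hF h⟩
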